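/- Let 𝒜 be a finite set of assets with |𝒜| > 2. A trading function f satisfies independence, translation invariance, and aversion to permanent loss if and only if f is equivalent to an LMSR market maker with parameter b > 0 or to a constant sum market maker. -/

import Mathlib

/-!
Translation invariance turns the certainty equivalent `H` (the point `t` of the diagonal that is
indifferent to a given inventory) into a function with `H (x + t) = H x + t`. Such a function
extends from the nonnegative orthant to the whole space, where it is strictly increasing,
quasiconcave and has an independent indifference relation; no boundary problems remain
(`IsTradingFunction.exists_isCertaintyEquivalent`).

Supporting hyperplanes of the superlevel sets of `H` give a supergradient `p x` at every point
(`exists_isSupergradient`), with positive coordinates of sum one. By independence and translation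
invariance, `p x i / p x j` is a decreasing, possibly multivalued, function of `x i - x j`
alone (`price_ratio_antitone`). For three assets the identity
`(p i / p j) * (p j / p k) = p i / p k` becomes, after taking logarithms, a Pexider equation
between monotone functions, up to jumps; its solutions are affine, with one common slope
(`affine_of_pexider_sandwich`, `exists_common_slope`). No differentiability of `H` is needed.
Hence `p` is a constant vector if the slope vanishes and the softmax otherwise, that is, the
gradient field of a constant sum market maker or of an LMSR with `b > 0`. Two functions with the
same continuous supergradient field differ by a constant
(`exists_eq_add_const_of_isSupergradient`), which identifies `H`.

Conversely, LMSRs with `b > 0` and constant sum market makers are concave, translation equivariant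
and additively separable up to a monotone change of scale. Equivalence is stated through
indifference only, but monotonicity along the diagonal lets the indifference relation determine
the order (`IsTradingFunction.le_iff_of_equivMM`), so convexity of the superlevel sets
transfers too.
-/


/-- All coordinates of the inventory are nonnegative. -/
def NonnegInv {𝒜 : Type*} (I : 𝒜 → ℝ) : Prop := ∀ a, 0 ≤ I a

/-- All coordinates of the inventory are strictly positive. -/
def PosInv {𝒜 : Type*} (I : 𝒜 → ℝ) : Prop := ∀ a, 0 < I a

/-- A trading function on inventory vectors with nonnegative coordinates:
strictly increasing in every coordinate at strictly positive inventories, and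
continuous in the sense that upper and lower level sets are closed. -/
structure IsTradingFunction {𝒜 : Type*} [Fintype 𝒜] [DecidableEq 𝒜]
    (f : (𝒜 → ℝ) → ℝ) : Prop where
  strictMono : ∀ I : 𝒜 → ℝ, PosInv I → ∀ (a : 𝒜) (t : ℝ), I a < t →
    f I < f (Function.update I a t)
  closed_upper : ∀ J : 𝒜 → ℝ, NonnegInv J →
    IsClosed {I : 𝒜 → ℝ | NonnegInv I ∧ f J ≤ f I}
  closed_lower : ∀ J : 𝒜 → ℝ, NonnegInv J →
    IsClosed {I : 𝒜 → ℝ | NonnegInv I ∧ f I ≤ f J}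

/-- Two trading functions are equivalent if they induce the same indifference
relation on nonnegative inventories. -/
def EquivMM {𝒜 : Type*} (f g : (𝒜 → ℝ) → ℝ) : Prop :=
  ∀ I J : 𝒜 → ℝ, NonnegInv I → NonnegInv J → (f I = f J ↔ g I = g J)

/-- The inventory agreeing with `I` on `B` and with `J` off `B`. -/
def mixInv {𝒜 : Type*} [DecidableEq 𝒜] (B : Finset 𝒜) (I J : 𝒜 → ℝ) : 𝒜 → ℝ :=
  fun a => if a ∈ B then I a else J a

/-- Independence axiom. -/
def IndependentMM {𝒜 : Type*} [Fintype 𝒜] [DecidableEq 𝒜] (f : (𝒜 → ℝ) → ℝ) : Prop :=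
  ∀ (B : Finset 𝒜) (I J : 𝒜 → ℝ), NonnegInv I → NonnegInv J →
    (f (mixInv B I J) = f J ↔ f I = f (mixInv B J I))

/-- Scale invariance axiom. -/
def ScaleInvariant {𝒜 : Type*} (f : (𝒜 → ℝ) → ℝ) : Prop :=
  ∀ I J : 𝒜 → ℝ, NonnegInv I → NonnegInv J → ∀ l : ℝ, 0 < l →
    f I = f J → f (fun a => l * I a) = f (fun a => l * J a)

/-- Translation invariance axiom. -/
def TranslationInvariant {𝒜 : Type*} (f : (𝒜 → ℝ) → ℝ) : Prop :=
  ∀ (I J : 𝒜 → ℝ) (t : ℝ), NonnegInv I → NonnegInv J →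
    NonnegInv (fun a => I a + t) → NonnegInv (fun a => J a + t) →
    f I = f J → f (fun a => I a + t) = f (fun a => J a + t)

/-- One invariance axiom. -/
def OneInvariant {𝒜 : Type*} (f : (𝒜 → ℝ) → ℝ) : Prop :=
  ∀ (I : 𝒜 → ℝ) (t : ℝ), NonnegInv I → NonnegInv (fun a => I a + t) →
    f (fun a => I a + t) = f I + t

/-- Homogeneity in liquidity. -/
def HomogeneousLiq {𝒜 : Type*} (f : (𝒜 → ℝ) → ℝ) : Prop :=
  ∀ I : 𝒜 → ℝ, NonnegInv I → ∀ l : ℝ, 0 < l → f (fun a => l * I a) = l * f I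

/-- Aversion to permanent loss: upper level sets are convex. -/
def AversionPL {𝒜 : Type*} [Fintype 𝒜] (f : (𝒜 → ℝ) → ℝ) : Prop :=
  ∀ J : 𝒜 → ℝ, NonnegInv J → Convex ℝ {I : 𝒜 → ℝ | NonnegInv I ∧ f J ≤ f I}

/-- Sufficient funds axiom. -/
def SufficientFunds {𝒜 : Type*} (f : (𝒜 → ℝ) → ℝ) : Prop :=
  ∀ I J : 𝒜 → ℝ, NonnegInv I → NonnegInv J → f I = f J → PosInv I → PosInv J

/-- Symmetry axiom. -/
def SymmetricMM {𝒜 : Type*} (f : (𝒜 → ℝ) → ℝ) : Prop :=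
  ∀ (π : Equiv.Perm 𝒜) (I : 𝒜 → ℝ), NonnegInv I → f I = f (fun a => I (π a))

/-- Constant inventory elasticity market maker with parameter `γ`,
constant `c` and weights `α`. -/
noncomputable def CEMM {𝒜 : Type*} [Fintype 𝒜] (γ c : ℝ) (α : 𝒜 → ℝ)
    (I : 𝒜 → ℝ) : ℝ :=
  if γ = 0 then c * ∏ a, I a ^ α a
  else c * (∑ a, α a * I a ^ γ) ^ (1 / γ)

/-- `f` is equivalent to a CEMM with parameter `γ`. -/
def IsCEMMEquiv {𝒜 : Type*} [Fintype 𝒜] (f : (𝒜 → ℝ) → ℝ) (γ : ℝ) : Prop :=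
  ∃ (c : ℝ) (α : 𝒜 → ℝ), 0 < c ∧ (∀ a, 0 < α a) ∧ (∑ a, α a) = 1 ∧
    EquivMM f (CEMM γ c α)

/-- Logarithmic scoring rule market maker with liquidity parameter `b` and
constants `c`. -/
noncomputable def LMSR {𝒜 : Type*} [Fintype 𝒜] (b : ℝ) (c : 𝒜 → ℝ)
    (I : 𝒜 → ℝ) : ℝ :=
  -b * Real.log (∑ a, Real.exp ((c a - I a) / b))

/-- Constant sum market maker with coefficients `c`. -/
def ConstSum {𝒜 : Type*} [Fintype 𝒜] (c : 𝒜 → ℝ) (I : 𝒜 → ℝ) : ℝ :=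
  ∑ a, c a * I a

/-! ### One-variable functional equation -/

/-- If increments over shorter steps never exceed increments over longer ones, wherever they are
taken, the function is affine. It is monotone, hence continuous somewhere; comparing increments
carries continuity to every point and then makes increments over equal steps equal. -/
lemma affine_of_increment_comparison {A : ℝ → ℝ}
    (hA : ∀ s s' r r' : ℝ, s - s' < r - r' → A s - A s' ≤ A r - A r') :
    ∃ l : ℝ, 0 ≤ l ∧ ∀ s, A s = l * s + A 0 := by
  have hmono : Monotone A := by
    intro r' r h
    rcases h.eq_or_lt with h | h
    · rw [h]
    · have := hA 0 0 r r' (by linarith)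
      linarith
  have hcont : Continuous A := by
    obtain ⟨s0, hs0⟩ : ∃ s0, ContinuousAt A s0 := by
      by_contra hne
      push Not at hne
      have h1 := hmono.countable_not_continuousAt
      have h2 : {x | ¬ ContinuousAt A x} = Set.univ := Set.eq_univ_of_forall hne
      rw [h2] at h1
      exact Cardinal.not_countable_real h1
    rw [Metric.continuous_iff]
    intro s ε hε
    obtain ⟨δ, hδ, h⟩ := Metric.continuousAt_iff.1 hs0 ε hε
    refine ⟨δ / 2, by linarith, fun r hr => ?_⟩
    rw [Real.dist_eq, abs_lt] at hr ⊢
    have h1 := h (x := s0 + δ / 2) (by rw [Real.dist_eq, abs_lt]; constructor <;> linarith)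
    rw [Real.dist_eq, abs_lt] at h1
    have h2 := hA r s (s0 + δ / 2) s0 (by linarith)
    have h3 := hA s r (s0 + δ / 2) s0 (by linarith)
    constructor <;> linarith
  have hle : ∀ s s' r r' : ℝ, s - s' = r - r' → A s - A s' ≤ A r - A r' := by
    intro s s' r r' h
    have h1 : Filter.Tendsto (fun x => A x - A r') (nhdsWithin r (Set.Ioi r)) (nhds (A r - A r')) :=
      ((hcont.sub continuous_const).tendsto r).mono_left nhdsWithin_le_nhds
    refine ge_of_tendsto h1 ?_
    filter_upwards [self_mem_nhdsWithin] with x hx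
    have hx' : r < x := hx
    exact hA _ _ _ _ (by linarith)
  let D : ℝ →+ ℝ :=
    { toFun := fun s => A s - A 0
      map_zero' := by simp
      map_add' := fun s t => by
        have h1 := hle (s + t) t s 0 (by ring)
        have h2 := hle s 0 (s + t) t (by ring)
        linarith }
  have hD : Continuous D := hcont.sub continuous_const
  refine ⟨A 1 - A 0, by linarith [hmono (zero_le_one (α := ℝ))], fun s => ?_⟩
  have h := map_real_smul D hD s 1
  have h' : A (s * 1) - A 0 = s * (A 1 - A 0) := h
  rw [mul_one] at h'
  linarith

/-- A form of the Pexider equation `A s + B t = C (s + t)` that tolerates jumps: it suffices that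
`C` compares correctly at points strictly above and strictly below `s + t`. -/
lemma affine_of_pexider_sandwich {A B C : ℝ → ℝ}
    (hlt : ∀ s t v, s + t < v → A s + B t ≤ C v)
    (hgt : ∀ s t v, v < s + t → C v ≤ A s + B t) :
    ∃ l : ℝ, 0 ≤ l ∧ (∀ s, A s = l * s + A 0) ∧ ∀ s, B s = l * s + B 0 := by
  have hAB : ∀ s s' t t' : ℝ, s - s' < t' - t → A s - A s' ≤ B t' - B t := by
    intro s s' t t' h
    have h1 := hlt s t ((s + t + (s' + t')) / 2) (by linarith)
    have h2 := hgt s' t' ((s + t + (s' + t')) / 2) (by linarith)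
    linarith
  have hBA : ∀ s s' t t' : ℝ, t' - t < s - s' → B t' - B t ≤ A s - A s' := by
    intro s s' t t' h
    have h1 := hlt s' t' ((s + t + (s' + t')) / 2) (by linarith)
    have h2 := hgt s t ((s + t + (s' + t')) / 2) (by linarith)
    linarith
  obtain ⟨l, hl, hA⟩ := affine_of_increment_comparison (A := A) (fun s s' r r' h =>
    (hAB s s' 0 ((s - s' + (r - r')) / 2) (by linarith)).trans
      (hBA r r' 0 ((s - s' + (r - r')) / 2) (by linarith)))
  obtain ⟨m, hm, hB⟩ := affine_of_increment_comparison (A := B) (fun s s' r r' h =>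
    (hBA ((s - s' + (r - r')) / 2) 0 s' s (by linarith)).trans
      (hAB ((s - s' + (r - r')) / 2) 0 r' r (by linarith)))
  have hlm : l = m := by
    apply le_antisymm
    · refine le_of_forall_pos_le_add fun ε hε => ?_
      have h := hAB 1 0 0 (1 + ε / (m + 1)) (by
        have : 0 < ε / (m + 1) := by positivity
        linarith)
      rw [hA 1, hB (1 + ε / (m + 1))] at h
      have h2 : m * (ε / (m + 1)) ≤ ε := by
        rw [mul_div_assoc', div_le_iff₀ (by linarith)]
        nlinarith
      nlinarith
    · refine le_of_forall_pos_le_add fun ε hε => ?_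
      have h := hBA (1 + ε / (l + 1)) 0 0 1 (by
        have : 0 < ε / (l + 1) := by positivity
        linarith)
      rw [hB 1, hA (1 + ε / (l + 1))] at h
      have h2 : l * (ε / (l + 1)) ≤ ε := by
        rw [mul_div_assoc', div_le_iff₀ (by linarith)]
        nlinarith
      nlinarith
  exact ⟨l, hl, hA, fun s => by rw [hlm]; exact hB s⟩

/-! ### Vector-valued version -/

/-- If for all `i ≠ j` the difference `u x i - u x j` is a monotone, possibly multivalued, function
of `x i - x j`, then it is an affine function of it, with the same slope for all pairs. With at
least three indices, the telescoping identity through a third index supplies a Pexider equation. -/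
lemma exists_common_slope {𝒜 : Type*} [Fintype 𝒜] [DecidableEq 𝒜]
    (hcard : 2 < Fintype.card 𝒜) (u : (𝒜 → ℝ) → 𝒜 → ℝ)
    (hu : ∀ i j, i ≠ j → ∀ x y : 𝒜 → ℝ, x i - x j < y i - y j →
      u x i - u x j ≤ u y i - u y j) :
    ∃ (l : ℝ) (c : 𝒜 → ℝ) (o : 𝒜), 0 ≤ l ∧
      ∀ x i, u x i - u x o = l * (x i - x o) + c i := by
  -- a single-valued selection `F i j` of the monotone relation, along the axis of `i`
  let F : 𝒜 → 𝒜 → ℝ → ℝ := fun i j s => u (Pi.single i s) i - u (Pi.single i s) j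
  have hFu : ∀ i j, i ≠ j → ∀ (x : 𝒜 → ℝ) s, s < x i - x j → F i j s ≤ u x i - u x j := by
    intro i j hij x s h
    exact hu i j hij _ _ (by simpa [Pi.single_apply, hij.symm] using h)
  have huF : ∀ i j, i ≠ j → ∀ (x : 𝒜 → ℝ) s, x i - x j < s → u x i - u x j ≤ F i j s := by
    intro i j hij x s h
    exact hu i j hij _ _ (by simpa [Pi.single_apply, hij.symm] using h)
  have hpex : ∀ i j k, i ≠ j → j ≠ k → i ≠ k → ∃ l : ℝ, 0 ≤ l ∧
      (∀ s, F i j s = l * s + F i j 0) ∧ ∀ s, F j k s = l * s + F j k 0 := by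
    intro i j k hij hjk hik
    apply affine_of_pexider_sandwich (C := F i k)
    · intro s t v h
      -- a point whose differences `x i - x j`, `x j - x k` slightly exceed `s`, `t`
      let x : 𝒜 → ℝ := Pi.single i (s + (v - s - t) / 3) - Pi.single k (t + (v - s - t) / 3)
      have h1 := hFu i j hij x s (by
        simp [x, hij.symm, hik, hjk]; linarith)
      have h2 := hFu j k hjk x t (by
        simp [x, hij.symm, hik.symm, hjk]; linarith)
      have h3 := huF i k hik x v (by
        simp [x, hik, hik.symm]; linarith)
      linarith
    · intro s t v h
      let x : 𝒜 → ℝ := Pi.single i (s + (v - s - t) / 3) - Pi.single k (t + (v - s - t) / 3)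
      have h1 := huF i j hij x s (by
        simp [x, hij.symm, hik, hjk]; linarith)
      have h2 := huF j k hjk x t (by
        simp [x, hij.symm, hik.symm, hjk]; linarith)
      have h3 := hFu i k hik x v (by
        simp [x, hik, hik.symm]; linarith)
      linarith
  -- an affine selection pins down the monotone relation at every point
  have hexact : ∀ i j, i ≠ j → ∀ l : ℝ, 0 ≤ l → (∀ s, F i j s = l * s + F i j 0) →
      ∀ x : 𝒜 → ℝ, u x i - u x j = l * (x i - x j) + F i j 0 := by
    intro i j hij l hl h x
    apply le_antisymm
    · refine le_of_forall_pos_le_add fun ε hε => ?_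
      have hpos : 0 < ε / (l + 1) := by positivity
      have h1 := huF i j hij x (x i - x j + ε / (l + 1)) (by linarith)
      rw [h] at h1
      have h2 : l * (ε / (l + 1)) ≤ ε := by
        rw [mul_div_assoc', div_le_iff₀ (by linarith)]
        nlinarith
      nlinarith
    · refine le_of_forall_pos_le_add fun ε hε => ?_
      have hpos : 0 < ε / (l + 1) := by positivity
      have h1 := hFu i j hij x (x i - x j - ε / (l + 1)) (by linarith)
      rw [h] at h1
      have h2 : l * (ε / (l + 1)) ≤ ε := by
        rw [mul_div_assoc', div_le_iff₀ (by linarith)]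
        nlinarith
      nlinarith
  obtain ⟨o, a, b, hoa, hob, hab⟩ := Fintype.two_lt_card_iff.1 hcard
  obtain ⟨l, hl, hao, -⟩ := hpex a o b hoa.symm hob hab
  refine ⟨l, fun i => if i = o then 0 else F i o 0, o, hl, fun x i => ?_⟩
  by_cases hio : i = o
  · simp [hio]
  simp only [hio, if_false]
  -- the slope of the pair `i, o` passes to `o, j`, and by antisymmetry to `j, o`
  have hslope : ∀ i j, i ≠ o → j ≠ o → i ≠ j → ∀ l : ℝ,
      (∀ s, F i o s = l * s + F i o 0) → 0 ≤ l →
      ∀ x : 𝒜 → ℝ, u x j - u x o = l * (x j - x o) + F j o 0 := by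
    intro i j hi hj hij l h hl x
    obtain ⟨m, hm, h1, h2⟩ := hpex i o j hi hj.symm hij
    obtain ⟨n, hn, h3, -⟩ := hpex j o i hj hi.symm hij.symm
    have hlm : l = m := by have := h 1; have := h1 1; linarith
    have e2 := hexact o j hj.symm m hm h2
    have e3 := hexact j o hj n hn h3
    have hmn : m = n := by
      have a1 := e2 (Pi.single j 1); have a2 := e3 (Pi.single j 1)
      have a3 := e2 0; have a4 := e3 0
      simp [hj.symm] at a1 a2 a3 a4
      linarith
    rw [hlm, hmn]; exact e3 x
  by_cases hia : i = a
  · subst hia; exact hexact i o hio l hl hao x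
  · exact hslope a i hoa.symm hio (Ne.symm hia) l hao hl x

/-! ### Supergradients -/

/-- `p` is a supergradient of `G` at `x`: the affine function with slope `p` through the graph
point over `x` lies above `G` everywhere. -/
def IsSupergradient {𝒜 : Type*} [Fintype 𝒜] (G : (𝒜 → ℝ) → ℝ) (p x : 𝒜 → ℝ) : Prop :=
  ∀ y : 𝒜 → ℝ, G y ≤ G x + ∑ i, p i * (y i - x i)

/-- A function with a supergradient at every point is concave, so its superlevel sets are
convex. -/
lemma convex_superlevel_of_isSupergradient {𝒜 : Type*} [Fintype 𝒜] {G : (𝒜 → ℝ) → ℝ}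
    {p : (𝒜 → ℝ) → 𝒜 → ℝ} (hp : ∀ x, IsSupergradient G (p x) x) (c : ℝ) :
    Convex ℝ {x | c ≤ G x} := by
  intro x hx y hy a b ha hb hab
  have h1 := hp (a • x + b • y) x
  have h2 := hp (a • x + b • y) y
  simp only [Set.mem_ofPred_eq] at hx hy ⊢
  set q := p (a • x + b • y)
  set z := a • x + b • y with hz
  have h3 : a * ∑ i, q i * (x i - z i) + b * ∑ i, q i * (y i - z i) = 0 := by
    rw [Finset.mul_sum, Finset.mul_sum, ← Finset.sum_add_distrib]
    apply Finset.sum_eq_zero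
    intro i _
    have : z i = a * x i + b * y i := by simp [hz]
    rw [this]
    obtain rfl : b = 1 - a := by linarith
    ring
  obtain rfl : b = 1 - a := by linarith
  nlinarith [mul_le_mul_of_nonneg_left (hx.trans h1) ha, mul_le_mul_of_nonneg_left (hy.trans h2) hb]

/-- Two functions sharing a continuous field of supergradients differ by a constant: the
difference has vanishing derivative. -/
lemma exists_eq_add_const_of_isSupergradient {𝒜 : Type*} [Fintype 𝒜] {G H : (𝒜 → ℝ) → ℝ}
    {p : (𝒜 → ℝ) → 𝒜 → ℝ} (hc : Continuous p) (hG : ∀ x, IsSupergradient G (p x) x)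
    (hH : ∀ x, IsSupergradient H (p x) x) : ∃ k : ℝ, ∀ x, H x = G x + k := by
  have hbound : ∀ x y : 𝒜 → ℝ,
      ‖(H y - G y) - (H x - G x)‖ ≤ (∑ i, ‖p y i - p x i‖) * ‖y - x‖ := by
    intro x y
    have h1 := hG x y
    have h2 := hG y x
    have h3 := hH x y
    have h4 := hH y x
    have h5 : ∑ i, p x i * (y i - x i) + ∑ i, p y i * (x i - y i)
        = - ∑ i, (p y i - p x i) * (y i - x i) := by
      rw [← Finset.sum_add_distrib, ← Finset.sum_neg_distrib]
      exact Finset.sum_congr rfl fun i _ => by ring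
    have h6 : |∑ i, (p y i - p x i) * (y i - x i)| ≤ (∑ i, ‖p y i - p x i‖) * ‖y - x‖ := by
      rw [Finset.sum_mul]
      refine (Finset.abs_sum_le_sum_abs _ _).trans (Finset.sum_le_sum fun i _ => ?_)
      rw [abs_mul]
      exact mul_le_mul_of_nonneg_left (norm_le_pi_norm (y - x) i) (abs_nonneg _)
    refine le_trans ?_ h6
    rw [Real.norm_eq_abs, abs_le]
    have h7 := neg_abs_le (∑ i, (p y i - p x i) * (y i - x i))
    have h8 := le_abs_self (∑ i, (p y i - p x i) * (y i - x i))
    constructor <;> linarith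
  have hderiv : ∀ x, HasFDerivAt (fun x => H x - G x) (0 : (𝒜 → ℝ) →L[ℝ] ℝ) x := by
    intro x
    rw [hasFDerivAt_iff_isLittleO, Asymptotics.isLittleO_iff]
    intro ε hε
    have h1 : Filter.Tendsto (fun y => ∑ i, ‖p y i - p x i‖) (nhds x) (nhds 0) := by
      have : Continuous (fun y => ∑ i, ‖p y i - p x i‖) := by fun_prop
      simpa using this.tendsto x
    filter_upwards [h1.eventually (gt_mem_nhds hε)] with y hy
    simp only [zero_apply, sub_zero]
    exact (hbound x y).trans (mul_le_mul_of_nonneg_right hy.le (norm_nonneg _))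
  refine ⟨H 0 - G 0, fun x => ?_⟩
  have := is_const_of_fderiv_eq_zero (𝕜 := ℝ) (f := fun x => H x - G x)
    (fun x => (hderiv x).differentiableAt) (fun x => (hderiv x).fderiv) x 0
  linarith

/-- The gradient of `LMSR b c`: the softmax prices. -/
noncomputable def lmsrPrice {𝒜 : Type*} [Fintype 𝒜] (b : ℝ) (c x : 𝒜 → ℝ) (i : 𝒜) : ℝ :=
  Real.exp ((c i - x i) / b) / ∑ j, Real.exp ((c j - x j) / b)

lemma lmsr_sum_pos {𝒜 : Type*} [Fintype 𝒜] [Nonempty 𝒜] (b : ℝ) (c x : 𝒜 → ℝ) :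
    0 < ∑ j, Real.exp ((c j - x j) / b) :=
  Finset.sum_pos (fun _ _ => Real.exp_pos _) Finset.univ_nonempty

lemma continuous_lmsrPrice {𝒜 : Type*} [Fintype 𝒜] [Nonempty 𝒜] (b : ℝ) (c : 𝒜 → ℝ) :
    Continuous (lmsrPrice b c) := by
  refine continuous_pi fun i => ?_
  unfold lmsrPrice
  refine Continuous.div (by fun_prop) (by fun_prop) fun x => (lmsr_sum_pos b c x).ne'

/-- This is Jensen's inequality for `exp` with the softmax weights. -/
lemma isSupergradient_lmsr {𝒜 : Type*} [Fintype 𝒜] [Nonempty 𝒜] {b : ℝ} (hb : 0 < b)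
    (c x : 𝒜 → ℝ) : IsSupergradient (LMSR b c) (lmsrPrice b c x) x := by
  intro y
  have hS := lmsr_sum_pos b c x
  have hT := lmsr_sum_pos b c y
  set S := ∑ j, Real.exp ((c j - x j) / b) with hSdef
  set T := ∑ j, Real.exp ((c j - y j) / b) with hTdef
  have hJ := convexOn_exp.map_sum_le (t := Finset.univ) (w := lmsrPrice b c x)
    (p := fun i => (x i - y i) / b)
    (fun i _ => div_nonneg (Real.exp_pos _).le hS.le)
    (by unfold lmsrPrice; rw [← Finset.sum_div]; exact div_self hS.ne')
    (fun i _ => Set.mem_univ _)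
  have hR : ∑ i, lmsrPrice b c x i • Real.exp ((x i - y i) / b) = T / S := by
    rw [hTdef, Finset.sum_div]
    refine Finset.sum_congr rfl fun i _ => ?_
    rw [lmsrPrice, smul_eq_mul, div_mul_eq_mul_div, ← Real.exp_add]
    congr 2
    ring
  rw [hR] at hJ
  have hlog := (Real.le_log_iff_exp_le (div_pos hT hS)).2 hJ
  rw [Real.log_div hT.ne' hS.ne'] at hlog
  have hL : ∑ i, lmsrPrice b c x i * (y i - x i)
      = - b * ∑ i, lmsrPrice b c x i • ((x i - y i) / b) := by
    rw [Finset.mul_sum]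
    refine Finset.sum_congr rfl fun i _ => ?_
    simp only [smul_eq_mul]
    field_simp
    ring
  rw [hL]
  simp only [LMSR]
  rw [← hSdef, ← hTdef]
  nlinarith [mul_le_mul_of_nonneg_left hlog hb.le]

lemma isSupergradient_constSum {𝒜 : Type*} [Fintype 𝒜] (c x : 𝒜 → ℝ) :
    IsSupergradient (ConstSum c) c x := by
  intro y
  rw [ConstSum, ConstSum, ← Finset.sum_add_distrib]
  exact (Finset.sum_congr rfl fun i _ => by ring).le

/-! ### Classification of certainty equivalents -/

/-- The certainty equivalent of a market maker on the whole space: strictly increasing in every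
coordinate, translation equivariant, quasiconcave, and with independent indifference relation. -/
structure IsCertaintyEquivalent {𝒜 : Type*} [DecidableEq 𝒜] (H : (𝒜 → ℝ) → ℝ) : Prop where
  mono : Monotone H
  strict : ∀ (x : 𝒜 → ℝ) (a : 𝒜) (t : ℝ), x a < t → H x < H (Function.update x a t)
  shift : ∀ (x : 𝒜 → ℝ) (t : ℝ), H (fun a => x a + t) = H x + t
  indep : ∀ (B : Finset 𝒜) (x y : 𝒜 → ℝ), H (mixInv B x y) = H y ↔ H x = H (mixInv B y x)
  quasiconcave : ∀ c : ℝ, Convex ℝ {x | c ≤ H x}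

namespace IsCertaintyEquivalent

variable {𝒜 : Type*} [Fintype 𝒜] [DecidableEq 𝒜] {H : (𝒜 → ℝ) → ℝ}

lemma continuous (hH : IsCertaintyEquivalent H) : Continuous H := by
  have h1 : ∀ x y : 𝒜 → ℝ, H x ≤ H y + dist x y := by
    intro x y
    rw [← hH.shift]
    apply hH.mono
    intro a
    have := (le_abs_self _).trans (dist_le_pi_dist x y a)
    simp only
    linarith
  have : LipschitzWith 1 H := LipschitzWith.of_le_add h1
  exact this.continuous

/-- The supporting hyperplane of the superlevel set through `x`, normalised to have total weight
one, is a supergradient, since `y` and `x` become indifferent after shifting `y`. -/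
lemma exists_isSupergradient (hH : IsCertaintyEquivalent H) (x : 𝒜 → ℝ) :
    ∃ p : 𝒜 → ℝ, ∑ i, p i = 1 ∧ IsSupergradient H p x := by
  have hconv : Convex ℝ {y | H x < H y} := by
    intro y hy z hz a b ha hb hab
    exact lt_of_lt_of_le (lt_min hy hz : H x < min (H y) (H z))
      (hH.quasiconcave (min (H y) (H z)) (Set.mem_ofPred.2 (min_le_left _ _))
        (Set.mem_ofPred.2 (min_le_right _ _)) ha hb hab)
  have hopen : IsOpen {y | H x < H y} := isOpen_lt continuous_const hH.continuous
  obtain ⟨L, hL⟩ := geometric_hahn_banach_point_open (x := x) hconv hopen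
    (by simp only [Set.mem_ofPred_eq]; exact lt_irrefl _)
  have hshift : ∀ (y : 𝒜 → ℝ) (t : ℝ), L (fun a => y a + t) = L y + t * L 1 := by
    intro y t
    have : (fun a => y a + t) = y + t • (1 : 𝒜 → ℝ) := by ext; simp
    rw [this, map_add, map_smul, smul_eq_mul]
  have h1 : 0 < L 1 := by
    have := hL (fun a => x a + 1) (by
      simp only [Set.mem_ofPred_eq]; rw [hH.shift]; linarith)
    rw [hshift] at this
    linarith
  have hclosed : ∀ y, H x ≤ H y → L x ≤ L y := by
    intro y hy
    refine le_of_forall_pos_le_add fun ε hε => ?_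
    have := hL (fun a => y a + ε / L 1) (by
      simp only [Set.mem_ofPred_eq]; rw [hH.shift]
      have : 0 < ε / L 1 := by positivity
      linarith)
    rw [hshift, div_mul_cancel₀ _ h1.ne'] at this
    exact this.le
  have hsum : ∀ y, L y = ∑ i, y i * L (Pi.single i 1) := by
    intro y
    conv_lhs => rw [← Finset.univ_sum_single y]
    rw [map_sum]
    refine Finset.sum_congr rfl fun i _ => ?_
    have : (Pi.single i (y i) : 𝒜 → ℝ) = y i • Pi.single i 1 := by
      rw [← Pi.single_smul, smul_eq_mul, mul_one]
    rw [this, map_smul, smul_eq_mul]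
  refine ⟨fun i => L (Pi.single i 1) / L 1, ?_, fun y => ?_⟩
  · rw [← Finset.sum_div]
    have := hsum 1
    simp only [Pi.one_apply, one_mul] at this
    rw [← this, div_self h1.ne']
  · have h2 := hclosed (fun a => y a + (H x - H y)) (by rw [hH.shift]; linarith)
    rw [hshift] at h2
    have h3 : ∑ i, L (Pi.single i 1) / L 1 * (y i - x i) = (L y - L x) / L 1 := by
      rw [hsum y, hsum x, ← Finset.sum_sub_distrib, Finset.sum_div]
      exact Finset.sum_congr rfl fun i _ => by ring
    rw [h3, ← sub_le_iff_le_add', le_div_iff₀ h1]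
    linarith

lemma supergradient_pos (hH : IsCertaintyEquivalent H) {p x : 𝒜 → ℝ}
    (hp : IsSupergradient H p x) (i : 𝒜) : 0 < p i := by
  have h1 := hH.strict x i (x i + 1) (by linarith)
  have h2 := hp (Function.update x i (x i + 1))
  have h3 : ∑ j, p j * (Function.update x i (x i + 1) j - x j) = p i := by
    rw [Finset.sum_eq_single i]
    · simp
    · intro j _ hj; simp [hj]
    · simp
  linarith

/-- The marginal rate of substitution between `i` and `j` is a (possibly multivalued) decreasing
function of the difference of the two inventories, whatever the other inventories are. By
independence and translation, the points may be placed on the same indifference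
curve in the plane of the coordinates `i`, `j`; supporting lines of a convex set at two points
of its boundary are then ordered. -/
lemma price_ratio_antitone (hH : IsCertaintyEquivalent H) {i j : 𝒜} (hij : i ≠ j)
    {x y p q : 𝒜 → ℝ} (hp : IsSupergradient H p x) (hq : IsSupergradient H q y)
    (h : x i - x j < y i - y j) : q i * p j ≤ p i * q j := by
  let B : Finset 𝒜 := {i, j}
  have hsum : ∀ r z w : 𝒜 → ℝ, ∑ k, r k * (mixInv B w z k - z k)
      = r i * (w i - z i) + r j * (w j - z j) := by
    intro r z w
    rw [← Finset.sum_pair (f := fun k => r k * (w k - z k)) hij]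
    symm
    apply Finset.sum_subset_zero_on_sdiff (Finset.subset_univ _)
    · intro k hk
      have : k ∉ B := by simpa [B] using hk
      simp [mixInv, this]
    · intro k hk
      have : k ∈ B := by simpa [B] using hk
      simp [mixInv, this]
  obtain ⟨s, hs⟩ : ∃ s : ℝ, H (mixInv B (fun a => y a + s) x) = H x := by
    have hcont : Continuous fun s : ℝ => H (mixInv B (fun a => y a + s) x) := by
      refine hH.continuous.comp (continuous_pi fun a => ?_)
      by_cases ha : a ∈ B <;> simp only [mixInv, ha, if_true, if_false] <;> fun_prop
    refine mem_range_of_exists_le_of_exists_ge hcont ⟨-dist x y, ?_⟩ ⟨dist x y, ?_⟩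
    · refine hH.mono fun a => ?_
      by_cases ha : a ∈ B <;> simp only [mixInv, ha, if_true, if_false, le_refl]
      have := (neg_abs_le _).trans' (neg_le_neg (dist_le_pi_dist x y a))
      linarith
    · refine hH.mono fun a => ?_
      by_cases ha : a ∈ B <;> simp only [mixInv, ha, if_true, if_false, le_refl]
      have := (le_abs_self _).trans (dist_le_pi_dist x y a)
      linarith
  have hs' := (hH.indep B _ _).1 hs
  have h1 := hp (mixInv B (fun a => y a + s) x)
  rw [hs, hsum] at h1
  have h2 := hq (fun a => mixInv B x (fun a => y a + s) a + (-s))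
  rw [hH.shift, ← hs', hH.shift] at h2
  have h3 : ∑ k, q k * (mixInv B x (fun a => y a + s) k + -s - y k)
      = q i * (x i - (y i + s)) + q j * (x j - (y j + s)) := by
    rw [← hsum q (fun a => y a + s) x]
    exact Finset.sum_congr rfl fun i _ => by ring
  rw [h3] at h2
  have pi := hH.supergradient_pos hp i
  have pj := hH.supergradient_pos hp j
  have qi := hH.supergradient_pos hq i
  have qj := hH.supergradient_pos hq j
  generalize ha : y i + s - x i = a at h1
  generalize hd : y j + s - x j = d at h1
  have h1' : 0 ≤ p i * a + p j * d := by linarith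
  have h2' : q i * a + q j * d ≤ 0 := by
    have e1 : x i - (y i + s) = -a := by linarith
    have e2 : x j - (y j + s) = -d := by linarith
    rw [e1, e2] at h2
    linarith
  have had : d < a := by linarith
  have hapos : 0 < a := by
    by_contra hneg
    push Not at hneg
    have : d < 0 := by linarith
    nlinarith [mul_pos_of_neg_of_neg this (neg_neg_of_pos pj), mul_nonneg pi.le (neg_nonneg.2 hneg)]
  -- eliminate `d` between the two inequalities, then cancel `a`
  have h4 : (q i * p j) * a ≤ (p i * q j) * a := by
    nlinarith [mul_le_mul_of_nonneg_left h2' pj.le, mul_le_mul_of_nonneg_left h1' qj.le]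
  exact le_of_mul_le_mul_right h4 hapos

theorem eq_lmsr_or_constSum (hH : IsCertaintyEquivalent H) (hcard : 2 < Fintype.card 𝒜) :
    (∃ (b : ℝ) (c : 𝒜 → ℝ), 0 < b ∧ ∃ k, ∀ x, H x = LMSR b c x + k) ∨
      ∃ c : 𝒜 → ℝ, (∀ a, 0 < c a) ∧ ∃ k, ∀ x, H x = ConstSum c x + k := by
  have : Nonempty 𝒜 := Fintype.card_pos_iff.1 (by omega)
  choose p hp1 hp using hH.exists_isSupergradient
  have hpos : ∀ x i, 0 < p x i := fun x => hH.supergradient_pos (hp x)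
  obtain ⟨l, c, o, hl, hc⟩ := exists_common_slope hcard (fun x i => -Real.log (p x i)) (by
    intro i j hij x y h
    have h1 := hH.price_ratio_antitone hij (hp x) (hp y) h
    have h2 := Real.log_le_log (mul_pos (hpos _ _) (hpos _ _)) h1
    rw [Real.log_mul (hpos _ _).ne' (hpos _ _).ne',
      Real.log_mul (hpos _ _).ne' (hpos _ _).ne'] at h2
    linarith)
  have hratio : ∀ x i, p x i = Real.exp (-(l * x i + c i)) * (p x o * Real.exp (l * x o)) := by
    intro x i
    have h := hc x i
    have h2 : p x i = Real.exp (-(l * x i + c i) + (Real.log (p x o) + l * x o)) := by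
      rw [← Real.exp_log (hpos x i)]
      congr 1
      linarith
    rw [h2, Real.exp_add, Real.exp_add, Real.exp_log (hpos x o)]
  -- normalising the total price to one gives the softmax formula
  have hprice : ∀ x i, p x i
      = Real.exp (-(l * x i + c i)) / ∑ j, Real.exp (-(l * x j + c j)) := by
    intro x i
    have hsum : (∑ j, Real.exp (-(l * x j + c j))) * (p x o * Real.exp (l * x o)) = 1 := by
      rw [Finset.sum_mul, ← hp1 x]
      exact Finset.sum_congr rfl fun j _ => (hratio x j).symm
    have hne : (∑ j, Real.exp (-(l * x j + c j))) ≠ 0 := left_ne_zero_of_mul_eq_one hsum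
    rw [eq_div_iff hne]
    calc p x i * (∑ j, Real.exp (-(l * x j + c j)))
        = Real.exp (-(l * x i + c i)) *
          ((∑ j, Real.exp (-(l * x j + c j))) * (p x o * Real.exp (l * x o))) := by
            conv_lhs => rw [hratio x i]
            ring
      _ = _ := by rw [hsum, mul_one]
  rcases hl.eq_or_lt with hl | hl
  · right
    have hconst : ∀ x, p x = p 0 := by
      intro x; ext i; rw [hprice, hprice]; simp [← hl]
    refine ⟨p 0, hpos 0, ?_⟩
    exact exists_eq_add_const_of_isSupergradient (p := fun _ => p 0) continuous_const
      (isSupergradient_constSum _) (fun x => hconst x ▸ hp x)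
  · left
    have hpl : p = lmsrPrice (1 / l) (fun i => -(c i / l)) := by
      ext x i
      rw [hprice, lmsrPrice]
      have : ∀ j, -(l * x j + c j) = (-(c j / l) - x j) / (1 / l) := by
        intro j; field_simp; ring
      simp only [this]
    refine ⟨1 / l, fun i => -(c i / l), by positivity, ?_⟩
    refine exists_eq_add_const_of_isSupergradient (continuous_lmsrPrice _ _)
      (isSupergradient_lmsr (by positivity) _) (fun x => ?_)
    rw [← hpl]; exact hp x

end IsCertaintyEquivalent

/-! ### The certainty equivalent of a trading function -/

namespace IsTradingFunction

/-- Every point is a limit of its translates up the diagonal; this reaches the boundary of the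
orthant from its interior. -/
lemma mem_of_forall_add_mem {𝒜 : Type*} {S : Set (𝒜 → ℝ)} (hS : IsClosed S) {x : 𝒜 → ℝ}
    {δ : ℝ} (hδ : 0 < δ) (h : ∀ t : ℝ, 0 < t → t < δ → (fun a => x a + t) ∈ S) : x ∈ S := by
  have hc : Filter.Tendsto (fun (t : ℝ) (a : 𝒜) => x a + t) (nhdsWithin 0 (Set.Ioi 0))
      (nhds x) := by
    have : Continuous (fun (t : ℝ) (a : 𝒜) => x a + t) := by fun_prop
    have h2 := this.tendsto 0
    simp only [add_zero] at h2
    exact h2.mono_left nhdsWithin_le_nhds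
  refine hS.mem_of_tendsto hc ?_
  filter_upwards [Ioo_mem_nhdsGT hδ] with t ht
  exact h t ht.1 ht.2

variable {𝒜 : Type*} [Fintype 𝒜] [DecidableEq 𝒜] {f : (𝒜 → ℝ) → ℝ}

lemma le_of_pos (hf : IsTradingFunction f) {I J : 𝒜 → ℝ} (hI : PosInv I) (h : ∀ a, I a ≤ J a) :
    f I ≤ f J := by
  -- raise the coordinates one at a time
  have key : ∀ B : Finset 𝒜, f I ≤ f (mixInv B J I) := by
    intro B
    induction B using Finset.induction_on with
    | empty => exact (congrArg f (by ext; simp [mixInv])).le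
    | insert a B ha ih =>
      refine ih.trans ?_
      have hu : mixInv (insert a B) J I = Function.update (mixInv B J I) a (J a) := by
        ext b
        by_cases hb : b = a
        · subst hb; simp [mixInv]
        · simp [mixInv, hb]
      have ha' : mixInv B J I a = I a := by simp [mixInv, ha]
      rw [hu]
      rcases (h a).eq_or_lt with he | hlt
      · rw [← he, ← ha', Function.update_eq_self]
      · refine (hf.strictMono _ (fun b => ?_) a (J a) (by rw [ha']; exact hlt)).le
        by_cases hb : b ∈ B
        · simpa [mixInv, hb] using (hI b).trans_le (h b)
        · simpa [mixInv, hb] using hI b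
  have := key Finset.univ
  have hu : mixInv Finset.univ J I = J := by ext; simp [mixInv]
  rwa [hu] at this

lemma lt_of_pos [Nonempty 𝒜] (hf : IsTradingFunction f) {I J : 𝒜 → ℝ} (hI : PosInv I)
    (h : ∀ a, I a < J a) : f I < f J := by
  obtain ⟨a⟩ := ‹Nonempty 𝒜›
  refine (hf.strictMono I hI a (J a) (h a)).trans_le (hf.le_of_pos (fun b => ?_) fun b => ?_)
  · by_cases hb : b = a
    · subst hb; simpa using (hI b).trans (h b)
    · simpa [hb] using hI b
  · by_cases hb : b = a
    · subst hb; simp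
    · simpa [hb] using (h b).le

lemma le_of_nonneg (hf : IsTradingFunction f) {I J : 𝒜 → ℝ} (hI : NonnegInv I)
    (h : ∀ a, I a ≤ J a) : f I ≤ f J := by
  have hJ : NonnegInv J := fun a => (hI a).trans (h a)
  refine (mem_of_forall_add_mem (hf.closed_upper I hI) (x := J) one_pos fun t ht _ => ?_).2
  have hJt : NonnegInv (fun a => J a + t) := fun a => add_nonneg (hJ a) ht.le
  refine ⟨hJt, (mem_of_forall_add_mem (hf.closed_lower _ hJt) (x := I) ht fun s hs hst => ?_).2⟩
  exact ⟨fun a => add_nonneg (hI a) hs.le,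
    hf.le_of_pos (fun a => by have := hI a; linarith) fun a => by have := h a; linarith⟩

lemma const_lt_const [Nonempty 𝒜] (hf : IsTradingFunction f) {s t : ℝ} (hs : 0 ≤ s) (h : s < t) :
    f (fun _ => s) < f (fun _ => t) :=
  (hf.le_of_nonneg (J := fun _ => (s + t) / 2) (fun _ => hs) fun _ => by linarith).trans_lt
    (hf.lt_of_pos (fun _ => by linarith) fun _ => by linarith)

lemma const_le_const_iff [Nonempty 𝒜] (hf : IsTradingFunction f) {s t : ℝ} (hs : 0 ≤ s)
    (ht : 0 ≤ t) : f (fun _ => s) ≤ f (fun _ => t) ↔ s ≤ t := by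
  constructor
  · intro h
    by_contra hlt
    exact (hf.const_lt_const ht (not_le.1 hlt)).not_ge h
  · intro h
    exact hf.le_of_nonneg (fun _ => hs) fun _ => h

/-- Connectedness of a segment of the diagonal: it is covered by the two closed level sets of
`I`. -/
lemma exists_const_eq (hf : IsTradingFunction f) {I : 𝒜 → ℝ} (hI : NonnegInv I) :
    ∃ s : ℝ, 0 ≤ s ∧ f I = f (fun _ => s) := by
  have hdiag : Continuous fun (s : ℝ) (_ : 𝒜) => s := by fun_prop
  have hM : 0 ≤ ∑ a, I a := Finset.sum_nonneg fun a _ => hI a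
  have h := isPreconnected_closed_iff.1 (isPreconnected_Icc (a := (0 : ℝ)) (b := ∑ a, I a))
    _ _ ((hf.closed_lower I hI).preimage hdiag) ((hf.closed_upper I hI).preimage hdiag)
    (fun s hs => by
      rcases le_total (f fun _ => s) (f I) with h | h
      · exact Or.inl ⟨fun _ => hs.1, h⟩
      · exact Or.inr ⟨fun _ => hs.1, h⟩)
    ⟨0, ⟨le_rfl, hM⟩, fun _ => le_rfl, hf.le_of_nonneg (fun _ => le_rfl) hI⟩
    ⟨∑ a, I a, ⟨hM, le_rfl⟩, fun _ => hM, hf.le_of_nonneg hI fun a =>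
      Finset.single_le_sum (f := I) (fun b _ => hI b) (Finset.mem_univ a)⟩
  obtain ⟨s, hs, h1, h2⟩ := h
  exact ⟨s, hs.1, le_antisymm h2.2 h1.2⟩

/-- Translation invariance makes the certainty equivalent translation equivariant, hence it
extends from the nonnegative orthant to the whole space. -/
lemma exists_certaintyEquivalent_extension [Nonempty 𝒜] (hf : IsTradingFunction f)
    (hT : TranslationInvariant f) : ∃ H : (𝒜 → ℝ) → ℝ, ∀ (x : 𝒜 → ℝ) (N : ℝ),
      NonnegInv (fun a => x a + N) →
        0 ≤ H x + N ∧ f (fun a => x a + N) = f (fun _ => H x + N) := by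
  have key : ∀ x : 𝒜 → ℝ, ∃ t : ℝ, ∀ N : ℝ, NonnegInv (fun a => x a + N) →
      0 ≤ t + N ∧ f (fun a => x a + N) = f (fun _ => t + N) := by
    intro x
    have h0 : NonnegInv (fun a => x a + ∑ b, |x b|) := fun a => by
      have h1 := Finset.single_le_sum (f := fun b => |x b|) (fun b _ => abs_nonneg _)
        (Finset.mem_univ a)
      have h2 := neg_abs_le (x a)
      simp only at h1 ⊢
      linarith
    generalize ∑ b, |x b| = M at h0
    obtain ⟨s, hs, hfs⟩ := hf.exists_const_eq h0
    refine ⟨s - M, fun N hN => ?_⟩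
    obtain ⟨r, hr, hfr⟩ := hf.exists_const_eq hN
    -- both equalities can be compared after shifting to the level `max M N`
    have shift : ∀ K L q : ℝ, K ≤ L → 0 ≤ q → NonnegInv (fun a => x a + K) →
        f (fun a => x a + K) = f (fun _ => q) →
        f (fun a => x a + L) = f (fun _ => q + (L - K)) := by
      intro K L q hKL hq hK h
      have h1 := hT _ _ (L - K) hK (fun _ => hq)
        (fun a => add_nonneg (hK a) (by linarith)) (fun a => add_nonneg hq (by linarith)) h
      have h2 : (fun a => x a + K + (L - K)) = fun a => x a + L := by ext; ring
      rwa [h2] at h1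
    have e1 := shift M (max M N) s (le_max_left _ _) hs h0 hfs
    have e2 := shift N (max M N) r (le_max_right _ _) hr hN hfr
    have hsM : 0 ≤ s + (max M N - M) := add_nonneg hs (by linarith [le_max_left M N])
    have hrN : 0 ≤ r + (max M N - N) := add_nonneg hr (by linarith [le_max_right M N])
    have e3 : s + (max M N - M) = r + (max M N - N) := le_antisymm
      ((hf.const_le_const_iff hsM hrN).1 (e1.symm.trans e2).le)
      ((hf.const_le_const_iff hrN hsM).1 (e2.symm.trans e1).le)
    have e4 : s - M + N = r := by linarith
    rw [e4]
    exact ⟨hr, hfr⟩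
  choose H hH using key
  exact ⟨H, hH⟩

lemma exists_isCertaintyEquivalent [Nonempty 𝒜] (hf : IsTradingFunction f)
    (hI : IndependentMM f) (hT : TranslationInvariant f) (hA : AversionPL f) :
    ∃ H : (𝒜 → ℝ) → ℝ, IsCertaintyEquivalent H ∧
      ∀ I J, NonnegInv I → NonnegInv J → (f I = f J ↔ H I = H J) := by
  obtain ⟨H, hH⟩ := hf.exists_certaintyEquivalent_extension hT
  have hle : ∀ x y N, NonnegInv (fun a => x a + N) → NonnegInv (fun a => y a + N) →
      (f (fun a => x a + N) ≤ f (fun a => y a + N) ↔ H x ≤ H y) := by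
    intro x y N hx hy
    rw [(hH x N hx).2, (hH y N hy).2, hf.const_le_const_iff (hH x N hx).1 (hH y N hy).1]
    exact add_le_add_iff_right N
  have heq : ∀ x y N, NonnegInv (fun a => x a + N) → NonnegInv (fun a => y a + N) →
      (f (fun a => x a + N) = f (fun a => y a + N) ↔ H x = H y) := by
    intro x y N hx hy
    rw [le_antisymm_iff, le_antisymm_iff, hle x y N hx hy, hle y x N hy hx]
  have hbig : ∀ x : 𝒜 → ℝ, ∃ N₀ : ℝ, ∀ N, N₀ < N → PosInv (fun a => x a + N) := by
    intro x
    refine ⟨∑ b, |x b|, fun N hN a => ?_⟩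
    have h1 := Finset.single_le_sum (f := fun b => |x b|) (fun b _ => abs_nonneg _)
      (Finset.mem_univ a)
    have h2 := neg_abs_le (x a)
    simp only at h1 ⊢
    linarith
  have hbig2 : ∀ x y : 𝒜 → ℝ, ∃ N : ℝ, PosInv (fun a => x a + N) ∧ PosInv (fun a => y a + N) := by
    intro x y
    obtain ⟨M, hM⟩ := hbig x
    obtain ⟨K, hK⟩ := hbig y
    exact ⟨max M K + 1, hM _ (by linarith [le_max_left M K]), hK _ (by linarith [le_max_right M K])⟩
  have hnn : ∀ {x : 𝒜 → ℝ}, PosInv x → NonnegInv x := fun h a => (h a).le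
  have hshift : ∀ (x : 𝒜 → ℝ) (t : ℝ), H (fun a => x a + t) = H x + t := by
    intro x t
    obtain ⟨N, hN, -⟩ := hbig2 (fun a => x a + t) x
    have h1 := hH (fun a => x a + t) N (hnn hN)
    have e : (fun a => x a + t + N) = fun a => x a + (t + N) := by ext; ring
    have h2 := hH x (t + N) (by rw [← e]; exact hnn hN)
    rw [e] at h1
    have h3 := h1.2.symm.trans h2.2
    have := le_antisymm ((hf.const_le_const_iff h1.1 h2.1).1 h3.le)
      ((hf.const_le_const_iff h2.1 h1.1).1 h3.ge)
    linarith
  refine ⟨H, ⟨?_, ?_, hshift, ?_, ?_⟩, ?_⟩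
  · intro x y hxy
    obtain ⟨N, hx, hy⟩ := hbig2 x y
    exact (hle x y N (hnn hx) (hnn hy)).1
      (hf.le_of_nonneg (hnn hx) fun a => by have := hxy a; linarith)
  · intro x a t hat
    obtain ⟨N, hx, hy⟩ := hbig2 x (Function.update x a t)
    rw [← not_le, ← hle _ _ N (hnn hy) (hnn hx), not_le]
    have h := hf.strictMono _ hx a (t + N) (by linarith)
    have e : Function.update (fun a => x a + N) a (t + N)
        = fun b => Function.update x a t b + N := by
      ext b
      by_cases hb : b = a
      · subst hb; simp
      · simp [hb]
    rwa [e] at h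
  · intro B x y
    obtain ⟨N, hx, hy⟩ := hbig2 x y
    have hmix : ∀ z w : 𝒜 → ℝ, mixInv B (fun a => z a + N) (fun a => w a + N)
        = fun a => mixInv B z w a + N := by
      intro z w
      ext a
      by_cases ha : a ∈ B <;> simp [mixInv, ha]
    have hmixn : ∀ z w : 𝒜 → ℝ, PosInv (fun a => z a + N) → PosInv (fun a => w a + N) →
        NonnegInv (fun a => mixInv B z w a + N) := by
      intro z w hz hw a
      by_cases ha : a ∈ B
      · simpa [mixInv, ha] using (hz a).le
      · simpa [mixInv, ha] using (hw a).le
    have h := hI B _ _ (hnn hx) (hnn hy)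
    rwa [hmix, hmix, heq _ _ N (hmixn x y hx hy) (hnn hy),
      heq _ _ N (hnn hx) (hmixn y x hy hx)] at h
  · intro c x hx y hy a b ha hb hab
    rw [Set.mem_ofPred_eq] at hx hy ⊢
    obtain ⟨N, hNx, hNy⟩ := hbig2 x y
    obtain ⟨K, hK⟩ := hbig (fun _ => c)
    -- far enough up the diagonal, everything lies in the nonnegative orthant
    obtain ⟨M, hM, hNM⟩ : ∃ M, PosInv (fun _ : 𝒜 => c + M) ∧ N ≤ M :=
      ⟨max N (K + 1), hK _ (by linarith [le_max_right N (K + 1)]), le_max_left _ _⟩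
    have hx' : NonnegInv (fun a => x a + M) := fun a => by have := hNx a; linarith
    have hy' : NonnegInv (fun a => y a + M) := fun a => by have := hNy a; linarith
    have hc : H (fun _ => c) = c := by
      have h1 := hH (fun _ => c) M (hnn hM)
      have h0 : 0 ≤ c + M := (hM (Classical.arbitrary 𝒜)).le
      have := le_antisymm ((hf.const_le_const_iff h0 h1.1).1 h1.2.le)
        ((hf.const_le_const_iff h1.1 h0).1 h1.2.ge)
      linarith
    have hz := hA _ (hnn hM) (x := fun a => x a + M)
      ⟨hx', (hle (fun _ => c) x M (hnn hM) hx').2 (by rw [hc]; exact hx)⟩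
      (y := fun a => y a + M)
      ⟨hy', (hle (fun _ => c) y M (hnn hM) hy').2 (by rw [hc]; exact hy)⟩ ha hb hab
    have e : (a • (fun a => x a + M) + b • fun a => y a + M)
        = fun i => (a • x + b • y) i + M := by
      ext i
      simp only [Pi.add_apply, Pi.smul_apply, smul_eq_mul]
      linear_combination M * hab
    rw [e] at hz
    have := (hle (fun _ => c) _ M (hnn hM) hz.1).1 hz.2
    rwa [hc] at this
  · intro I J hI hJ
    have := heq I J 0 (by simpa using hI) (by simpa using hJ)
    simpa using this

/-! ### Indifference determines the order -/

/-- A trading function is ordinally determined by its indifference relation: comparing `I` with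
the point of the diagonal line through `I` that is indifferent to `J` decides the order. -/
lemma le_iff_of_equivMM (hf : IsTradingFunction f) {G : (𝒜 → ℝ) → ℝ} {k : ℝ}
    (hk : 0 < k) (hG : ∀ (x : 𝒜 → ℝ) t, G (fun a => x a + t) = G x + k * t)
    (h : EquivMM f G) {I J : 𝒜 → ℝ} (hI : NonnegInv I) (hJ : NonnegInv J) :
    f I ≤ f J ↔ G I ≤ G J := by
  have key : ∀ {I J : 𝒜 → ℝ}, NonnegInv I → NonnegInv J → G I < G J → f I < f J := by
    intro I J hI hJ hlt
    have ht : 0 < (G J - G I) / k := div_pos (by linarith) hk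
    have hI' : NonnegInv (fun a => I a + (G J - G I) / k) := fun a => add_nonneg (hI a) ht.le
    have h1 : f (fun a => I a + (G J - G I) / k) = f J := by
      rw [h _ _ hI' hJ, hG]
      field_simp
      ring
    refine lt_of_le_of_ne ?_ fun he => hlt.ne ((h _ _ hI hJ).1 he)
    rw [← h1]
    exact hf.le_of_nonneg hI fun a => by linarith
  constructor
  · intro hle
    by_contra hlt
    exact (key hJ hI (not_le.1 hlt)).not_ge hle
  · intro hle
    rcases hle.eq_or_lt with he | hlt
    · exact ((h _ _ hI hJ).2 he).le
    · exact (key hI hJ hlt).le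

/-- The three axioms pass from a concave translation equivariant function `G` with additively
separable level sets (through `φ` and `S`) to every trading function equivalent to it. -/
lemma properties_of_equivMM (hf : IsTradingFunction f) {G : (𝒜 → ℝ) → ℝ} {k : ℝ}
    (hk : 0 < k) (hG : ∀ (x : 𝒜 → ℝ) t, G (fun a => x a + t) = G x + k * t)
    {p : (𝒜 → ℝ) → 𝒜 → ℝ} (hp : ∀ x, IsSupergradient G (p x) x)
    {φ : 𝒜 → ℝ → ℝ} (hφ : ∀ x y, G x = G y ↔ ∑ a, φ a (x a) = ∑ a, φ a (y a))
    (h : EquivMM f G) : IndependentMM f ∧ TranslationInvariant f ∧ AversionPL f := by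
  refine ⟨?_, ?_, ?_⟩
  · intro B I J hI hJ
    have hmixn : ∀ {z w : 𝒜 → ℝ}, NonnegInv z → NonnegInv w → NonnegInv (mixInv B z w) := by
      intro z w hz hw a
      by_cases ha : a ∈ B
      · simpa [mixInv, ha] using hz a
      · simpa [mixInv, ha] using hw a
    rw [h _ _ (hmixn hI hJ) hJ, h _ _ hI (hmixn hJ hI), hφ, hφ]
    have hsum : ∑ a, φ a (mixInv B I J a) + ∑ a, φ a (mixInv B J I a)
        = ∑ a, φ a (I a) + ∑ a, φ a (J a) := by
      rw [← Finset.sum_add_distrib, ← Finset.sum_add_distrib]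
      refine Finset.sum_congr rfl fun a _ => ?_
      by_cases ha : a ∈ B <;> simp [mixInv, ha, add_comm]
    constructor <;> intro <;> linarith
  · intro I J t hI hJ hIt hJt he
    rw [h _ _ hIt hJt, hG, hG, (h _ _ hI hJ).1 he]
  · intro J hJ x hx y hy a b ha hb hab
    have hz : NonnegInv (a • x + b • y) := fun i =>
      add_nonneg (mul_nonneg ha (hx.1 i)) (mul_nonneg hb (hy.1 i))
    refine ⟨hz, (hf.le_iff_of_equivMM hk hG h hJ hz).2 ?_⟩
    exact convex_superlevel_of_isSupergradient hp (G J)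
      ((hf.le_iff_of_equivMM hk hG h hJ hx.1).1 hx.2)
      ((hf.le_iff_of_equivMM hk hG h hJ hy.1).1 hy.2) ha hb hab

end IsTradingFunction

lemma lmsr_add_const {𝒜 : Type*} [Fintype 𝒜] [Nonempty 𝒜] {b : ℝ} (hb : 0 < b) (c x : 𝒜 → ℝ)
    (t : ℝ) : LMSR b c (fun a => x a + t) = LMSR b c x + 1 * t := by
  have h : ∑ a, Real.exp ((c a - (x a + t)) / b)
      = Real.exp (-(t / b)) * ∑ a, Real.exp ((c a - x a) / b) := by
    rw [Finset.mul_sum]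
    refine Finset.sum_congr rfl fun a _ => ?_
    rw [← Real.exp_add]
    congr 1
    ring
  rw [LMSR, LMSR, h, Real.log_mul (Real.exp_pos _).ne' (lmsr_sum_pos b c x).ne', Real.log_exp]
  field_simp
  ring

lemma lmsr_eq_iff {𝒜 : Type*} [Fintype 𝒜] [Nonempty 𝒜] {b : ℝ} (hb : 0 < b) (c x y : 𝒜 → ℝ) :
    LMSR b c x = LMSR b c y ↔
      ∑ a, Real.exp ((c a - x a) / b) = ∑ a, Real.exp ((c a - y a) / b) := by
  rw [LMSR, LMSR, mul_right_inj' (neg_ne_zero.2 hb.ne')]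
  exact Real.log_injOn_pos.eq_iff (lmsr_sum_pos b c x) (lmsr_sum_pos b c y)

/-- Corollary 3: independence, translation invariance and aversion to permanent
loss characterize LMSRs with `b > 0` and constant sum market makers. -/
theorem stmt7 {𝒜 : Type*} [Fintype 𝒜] [DecidableEq 𝒜] (hcard : 2 < Fintype.card 𝒜)
    (f : (𝒜 → ℝ) → ℝ) (hf : IsTradingFunction f) :
    (IndependentMM f ∧ TranslationInvariant f ∧ AversionPL f) ↔
      ((∃ (b : ℝ) (c : 𝒜 → ℝ), 0 < b ∧ EquivMM f (LMSR b c)) ∨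
        (∃ c : 𝒜 → ℝ, (∀ a, 0 < c a) ∧ EquivMM f (ConstSum c))) := by
  have : Nonempty 𝒜 := Fintype.card_pos_iff.1 (by omega)
  constructor
  · rintro ⟨hI, hT, hA⟩
    obtain ⟨H, hH, hfH⟩ := hf.exists_isCertaintyEquivalent hI hT hA
    rcases hH.eq_lmsr_or_constSum hcard with ⟨b, c, hb, k, hk⟩ | ⟨c, hc, k, hk⟩
    · refine Or.inl ⟨b, c, hb, fun I J hI hJ => ?_⟩
      rw [hfH I J hI hJ, hk, hk, add_left_inj]
    · refine Or.inr ⟨c, hc, fun I J hI hJ => ?_⟩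
      rw [hfH I J hI hJ, hk, hk, add_left_inj]
  · rintro (⟨b, c, hb, h⟩ | ⟨c, hc, h⟩)
    · exact hf.properties_of_equivMM one_pos (lmsr_add_const hb c) (isSupergradient_lmsr hb c)
        (φ := fun a t => Real.exp ((c a - t) / b)) (lmsr_eq_iff hb c) h
    · refine hf.properties_of_equivMM (k := ∑ a, c a)
        (Finset.sum_pos (fun a _ => hc a) Finset.univ_nonempty) (fun x t => ?_)
        (isSupergradient_constSum c) (φ := fun a t => c a * t) (fun x y => Iff.rfl) h
      rw [ConstSum, ConstSum, Finset.sum_mul, ← Finset.sum_add_distrib]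
      exact Finset.sum_congr rfl fun a _ => by ring
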